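/- arXiv:0808.0752 — 2 statements merged into one kernel-verified Lean document; each statement's English description precedes it below -/
import Mathlib

section
/- Let G be a group and let c₁, …, c₉, e₁, f₁, e₂, f₂, x₁, x₂, x₃, x̄₃, δ₁, δ₂, δ₃, t, v, t₁₄, v₁₄ ∈ G. Assume all the hypotheses of the genus-4 computation: the braid relations c₁*c₂*c₁ = c₂*c₁*c₂, c₄*e₁*c₄ = e₁*c₄*e₁, c₄*f₁*c₄ = f₁*c₄*f₁, c₆*e₂*c₆ = e₂*c₆*e₂, c₈*c₉*c₈ = c₉*c₈*c₉; the chain relations (c₄*e₁*c₄*f₁)^3 = δ₁*δ₂ and (c₉*c₈)^6 = δ₃; the lantern relations δ₁*x₁*c₃ = c₁*c₁*e₁*f₁, δ₂*x₂*c₅ = e₁*f₁*e₂*f₂, δ₃*x₃*c₇ = e₂*f₂*c₉*c₉, f₂*t*v = f₁*c₅*c₇*c₉; the identity c₇*x̄₃ = x₃*c₇; that δ₁, δ₂, δ₃ commute with each other and with every other listed element; e₁ commutes with f₁; e₂ commutes with f₂; each of e₁, f₁ commutes with each of e₂, f₂, x₂, c₅; each of e₂, f₂ commutes with x₃, c₇,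 c₉; f₁, c₅, c₇, c₉ pairwise commute; f₁ commutes with x₂, t, v; t and v each commute with c₅; c₉ commutes with c₆, x₃, x̄₃; c₁ commutes with each of c₃, c₄, c₅, c₆, c₇, c₈, c₉, e₁, f₁, x₁, x₂, t, v, x̄₃. Assume in addition: the lantern relation f₁*t₁₄*v₁₄ = c₁*c₃*v*c₉; that c₁, c₃, v, c₉ pairwise commute; that c₁ commutes with t₁₄ and v₁₄; that c₃ commutes with e₁, t₁₄, v₁₄; and that c₉ commutes with x₂, t, v. Set ȳ₁ = c₁*c₁*c₂*c₁⁻¹*c₁⁻¹, r₁ = f₁⁻¹*c₄*f₁, u₁ = c₃*r₁*c₃⁻¹, s̄₂ = c₃*c₄*c₃⁻¹, w = v⁻¹*x₂*v, z = v⁻¹*t*v, s₃ = c₇⁻¹*c₆*c₇, r₄ = c₉⁻¹*c₈*c₉. Then (c₁*c₂)^2 * (c₄*e₁*c₄*f₁)⁻¹ * (c₆*e₂*c₆*f₂) * ((c₉*c₈)^2)⁻¹ = ȳ₁*x₁*u₁*e₁*e₁*s̄₂*t₁₄*v₁₄*w*z*s₃*x̄₃*r₄*c₉*c₈*c₈.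 -/
/-!
Write `A = c₄ * e₁ * c₄ * f₁`. The chain relation `A ^ 3 = δ₁ * δ₂` turns `A⁻¹` into `A ^ 2` times
`δ₁⁻¹` and `δ₂⁻¹`, and `(c₉ * c₈) ^ 6 = δ₃` likewise turns `((c₉ * c₈) ^ 2)⁻¹` into
`(c₉ * c₈) ^ 4 * δ₃⁻¹`. The first three lantern relations trade each `δᵢ⁻¹` for a positive twist
`xᵢ`. The inverse twists introduced in the process cancel or only conjugate other letters, except
for one `f₁⁻¹` coming from the fourth lantern relation. Since `c₁`, `c₃`, `v`, `c₉` can be gathered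
around `f₁⁻¹`, the fifth lantern relation absorbs it into `t₁₄ * v₁₄`.
-/

section GroupRelations

variable {G : Type*} [Group G]

theorem mul_pow_two_of_braid {a b : G} (h : a * b * a = b * a * b) :
    (a * b) ^ 2 = a * a * b * a⁻¹ * a⁻¹ * a ^ 3 := by
  calc (a * b) ^ 2 = a * (b * a * b) := by simp only [pow_two, mul_assoc]
    _ = a * a * b * a⁻¹ * a⁻¹ * a ^ 3 := by rw [← h]; group

theorem mul_pow_four_of_braid {a b : G} (h : a * b * a = b * a * b) :
    (a * b) ^ 4 = a ^ 3 * b * a * a * b * b := by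
  calc (a * b) ^ 4 = a * (b * a * b) * (a * b * a) * b := by
        simp only [pow_succ, pow_zero, one_mul, mul_assoc]
    _ = a * (a * b * a) * (b * a * b) * b := by rw [h]
    _ = a * a * (b * a * b) * a * b * b := by simp only [mul_assoc]
    _ = a ^ 3 * b * a * a * b * b := by
        rw [← h]; simp only [pow_succ, pow_zero, one_mul, mul_assoc]

theorem inv_mul_chain_sq {c e f : G} (h : c * e * c = e * c * e) (hef : Commute e f) :
    (e * f)⁻¹ * (c * e * c * f) ^ 2 = f⁻¹ * c * f * e * e * c * (e * f) := by
  have chain_eq : c * e * c * f = e * c * (e * f) := by rw [h, mul_assoc]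
  calc (e * f)⁻¹ * (c * e * c * f) ^ 2
      = f⁻¹ * c * (e * f) * e * c * (e * f) := by rw [pow_two, chain_eq]; group
    _ = f⁻¹ * c * f * e * e * c * (e * f) := by rw [hef.eq]; simp only [mul_assoc]

theorem inv_eq_of_pow_three_eq_mul {a d d' : G} (h : a ^ 3 = d * d') (hd' : Commute d' a) :
    a⁻¹ = d⁻¹ * a ^ 2 * d'⁻¹ := by
  calc a⁻¹ = d' * a⁻¹ * d'⁻¹ := by rw [hd'.inv_right.eq, mul_inv_cancel_right]
    _ = d⁻¹ * (d * d') * a⁻¹ * d'⁻¹ := by rw [inv_mul_cancel_left]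
    _ = d⁻¹ * a ^ 2 * d'⁻¹ := by rw [← h]; group

theorem mul_inv_of_lantern {δ x c p q : G} (h : δ * x * c = p * q) (hδ : Commute δ p) :
    p * δ⁻¹ = x * c * q⁻¹ := by
  calc p * δ⁻¹ = δ⁻¹ * (p * q) * q⁻¹ := by
        rw [← hδ.inv_left.eq, mul_assoc, mul_inv_cancel_right]
    _ = x * c * q⁻¹ := by rw [← h, mul_assoc δ, inv_mul_cancel_left]

theorem commute_of_lantern {a f t v p q r s : G} (hlantern : f * t * v = p * q * r * s)
    (ha : ∀ b ∈ [p, q, r, s, t, v], Commute a b) : Commute a f := by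
  simp only [List.forall_mem_cons] at ha
  obtain ⟨hp, hq, hr, hs, ht, hv, -⟩ := ha
  have hf : f = p * q * r * s * (t * v)⁻¹ :=
    eq_mul_inv_of_mul_eq (by rw [← mul_assoc, hlantern])
  exact hf ▸ (((hp.mul_right hq).mul_right hr).mul_right hs).mul_right (ht.mul_right hv).inv_right

theorem sq_mul_chain_inv {c₁ c₃ c₄ e f x δ₁ δ₂ : G}
    (hb : c₄ * e * c₄ = e * c₄ * e) (hchain : (c₄ * e * c₄ * f) ^ 3 = δ₁ * δ₂)
    (hlantern : δ₁ * x * c₃ = c₁ * c₁ * e * f) (hef : Commute e f) (hδ₁ : Commute δ₁ c₁)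
    (hδ₂ : Commute δ₂ (c₄ * e * c₄ * f)) (hc₃ : Commute c₃ e) :
    c₁ ^ 2 * (c₄ * e * c₄ * f)⁻¹ =
      x * (c₃ * (f⁻¹ * c₄ * f) * c₃⁻¹) * e * e * (c₃ * c₄ * c₃⁻¹) * c₃ * (e * f * δ₂⁻¹) := by
  have hδ₁_inv : c₁ ^ 2 * δ₁⁻¹ = x * c₃ * (e * f)⁻¹ :=
    mul_inv_of_lantern (by rw [hlantern, pow_two, mul_assoc]) (hδ₁.pow_right 2)
  calc c₁ ^ 2 * (c₄ * e * c₄ * f)⁻¹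
      = c₁ ^ 2 * δ₁⁻¹ * (c₄ * e * c₄ * f) ^ 2 * δ₂⁻¹ := by
        rw [inv_eq_of_pow_three_eq_mul hchain hδ₂]; simp only [mul_assoc]
    _ = x * c₃ * ((e * f)⁻¹ * (c₄ * e * c₄ * f) ^ 2) * δ₂⁻¹ := by
        rw [hδ₁_inv]; simp only [mul_assoc]
    _ = x * (c₃ * (f⁻¹ * c₄ * f) * c₃⁻¹) * (c₃ * (e * e)) * c₄ * (e * f * δ₂⁻¹) := by
        rw [inv_mul_chain_sq hb hef]; group
    _ = x * (c₃ * (f⁻¹ * c₄ * f) * c₃⁻¹) * e * e * (c₃ * c₄ * c₃⁻¹) * c₃ * (e * f * δ₂⁻¹) := by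
        rw [(hc₃.mul_right hc₃).eq]; group

theorem braid_sq_mul_chain_inv {c₁ c₂ c₃ c₄ e f x δ₁ δ₂ : G}
    (hb : c₁ * c₂ * c₁ = c₂ * c₁ * c₂) (hb' : c₄ * e * c₄ = e * c₄ * e)
    (hchain : (c₄ * e * c₄ * f) ^ 3 = δ₁ * δ₂) (hlantern : δ₁ * x * c₃ = c₁ * c₁ * e * f)
    (hef : Commute e f) (hδ₁ : Commute δ₁ c₁) (hδ₂ : Commute δ₂ (c₄ * e * c₄ * f))
    (hc₁ : ∀ b ∈ [c₃, c₄, e, f, x], Commute c₁ b) (hc₃ : Commute c₃ e) :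
    (c₁ * c₂) ^ 2 * (c₄ * e * c₄ * f)⁻¹ =
      (c₁ * c₁ * c₂ * c₁⁻¹ * c₁⁻¹) * x * (c₃ * (f⁻¹ * c₄ * f) * c₃⁻¹) * e * e *
        (c₃ * c₄ * c₃⁻¹) * (c₁ * c₃) * (e * f * δ₂⁻¹) := by
  simp only [List.forall_mem_cons] at hc₁
  obtain ⟨h₃, h₄, he, hf, hx, -⟩ := hc₁
  have hu : Commute c₁ (c₃ * (f⁻¹ * c₄ * f) * c₃⁻¹) :=
    (h₃.mul_right ((hf.inv_right.mul_right h₄).mul_right hf)).mul_right h₃.inv_right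
  have hs : Commute c₁ (c₃ * c₄ * c₃⁻¹) := (h₃.mul_right h₄).mul_right h₃.inv_right
  have hword := ((((hx.mul_right hu).mul_right he).mul_right he).mul_right hs).eq
  calc (c₁ * c₂) ^ 2 * (c₄ * e * c₄ * f)⁻¹
      = c₁ * c₁ * c₂ * c₁⁻¹ * c₁⁻¹ * c₁ * (c₁ ^ 2 * (c₄ * e * c₄ * f)⁻¹) := by
        rw [mul_pow_two_of_braid hb, pow_succ' c₁ 2]; simp only [mul_assoc]
    _ = c₁ * c₁ * c₂ * c₁⁻¹ * c₁⁻¹ *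
          (c₁ * (x * (c₃ * (f⁻¹ * c₄ * f) * c₃⁻¹) * e * e * (c₃ * c₄ * c₃⁻¹))) *
          c₃ * (e * f * δ₂⁻¹) := by
        rw [sq_mul_chain_inv hb' hchain hlantern hef hδ₁ hδ₂ hc₃]; simp only [mul_assoc]
    _ = (c₁ * c₁ * c₂ * c₁⁻¹ * c₁⁻¹) * x * (c₃ * (f⁻¹ * c₄ * f) * c₃⁻¹) * e * e *
          (c₃ * c₄ * c₃⁻¹) * (c₁ * c₃) * (e * f * δ₂⁻¹) := by
        rw [hword]; simp only [mul_assoc]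

theorem boundary_inv_mul_chain {c₅ c₆ c₇ c₉ e₁ f₁ e₂ f₂ x t v δ : G}
    (hb : c₆ * e₂ * c₆ = e₂ * c₆ * e₂) (hlantern : δ * x * c₅ = e₁ * f₁ * e₂ * f₂)
    (hlantern' : f₂ * t * v = f₁ * c₅ * c₇ * c₉) (hδ : Commute δ (e₁ * f₁))
    (hc₅ : ∀ b ∈ [c₇, c₉, t, v], Commute c₅ b) (hf₁ : ∀ b ∈ [c₇, c₉, x, t, v], Commute f₁ b) :
    e₁ * f₁ * δ⁻¹ * (c₆ * e₂ * c₆ * f₂) =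
      f₁⁻¹ * x * t * v * (c₇ * c₉)⁻¹ * c₆ * (e₂ * f₂) := by
  simp only [List.forall_mem_cons] at hc₅ hf₁
  obtain ⟨h₅₇, h₅₉, h₅t, h₅v, -⟩ := hc₅
  obtain ⟨hf₇, hf₉, hfx, hft, hfv, -⟩ := hf₁
  have hδ_inv : e₁ * f₁ * δ⁻¹ = x * c₅ * (e₂ * f₂)⁻¹ :=
    mul_inv_of_lantern (by rw [hlantern, mul_assoc (e₁ * f₁)]) hδ
  have hf₂_inv : f₂⁻¹ = t * v * (c₇ * c₉)⁻¹ * c₅⁻¹ * f₁⁻¹ := by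
    calc f₂⁻¹ = t * v * (f₂ * t * v)⁻¹ := by group
      _ = t * v * (c₇ * c₉)⁻¹ * c₅⁻¹ * f₁⁻¹ := by rw [hlantern']; group
  have h₅ : Commute c₅ (t * v * (c₇ * c₉)⁻¹) :=
    (h₅t.mul_right h₅v).mul_right (h₅₇.mul_right h₅₉).inv_right
  have hf : Commute f₁ (x * (t * v * (c₇ * c₉)⁻¹)) :=
    hfx.mul_right ((hft.mul_right hfv).mul_right (hf₇.mul_right hf₉).inv_right)
  calc e₁ * f₁ * δ⁻¹ * (c₆ * e₂ * c₆ * f₂)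
      = x * (c₅ * f₂⁻¹) * c₆ * (e₂ * f₂) := by rw [hδ_inv, hb]; group
    _ = x * (c₅ * (t * v * (c₇ * c₉)⁻¹)) * c₅⁻¹ * f₁⁻¹ * c₆ * (e₂ * f₂) := by
        rw [hf₂_inv]; simp only [mul_assoc]
    _ = x * (t * v * (c₇ * c₉)⁻¹) * f₁⁻¹ * c₆ * (e₂ * f₂) := by
        rw [h₅.eq]; simp only [mul_assoc, mul_inv_cancel_left]
    _ = f₁⁻¹ * x * t * v * (c₇ * c₉)⁻¹ * c₆ * (e₂ * f₂) := by
        rw [← hf.inv_left.eq]; simp only [mul_assoc]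

theorem mul_braid_sq_inv {c₇ c₈ c₉ p x y δ : G}
    (hb : c₈ * c₉ * c₈ = c₉ * c₈ * c₉) (hchain : (c₉ * c₈) ^ 6 = δ)
    (hlantern : δ * x * c₇ = p * c₉ * c₉) (hy : c₇ * y = x * c₇) (hδ : Commute δ p) :
    p * ((c₉ * c₈) ^ 2)⁻¹ = c₇ * y * (c₉ * c₈ * c₉ * c₉ * c₈ * c₈) := by
  have hδ_inv : p * δ⁻¹ = x * c₇ * (c₉ * c₉)⁻¹ :=
    mul_inv_of_lantern (by rw [hlantern, mul_assoc p]) hδ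
  calc p * ((c₉ * c₈) ^ 2)⁻¹ = p * δ⁻¹ * (c₉ * c₈) ^ 4 := by rw [← hchain]; group
    _ = x * c₇ * (c₉ * c₉)⁻¹ * (c₉ ^ 3 * c₈ * c₉ * c₉ * c₈ * c₈) := by
        rw [hδ_inv, mul_pow_four_of_braid hb.symm]
    _ = c₇ * y * (c₉ * c₈ * c₉ * c₉ * c₈ * c₈) := by rw [hy]; group

theorem boundary_inv_mul_chain_mul_braid_sq_inv
    {c₅ c₆ c₇ c₈ c₉ e₁ f₁ e₂ f₂ x₂ x₃ y t v δ₂ δ₃ : G}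
    (hb : c₆ * e₂ * c₆ = e₂ * c₆ * e₂) (hb' : c₈ * c₉ * c₈ = c₉ * c₈ * c₉)
    (hchain : (c₉ * c₈) ^ 6 = δ₃) (hlantern₂ : δ₂ * x₂ * c₅ = e₁ * f₁ * e₂ * f₂)
    (hlantern₃ : δ₃ * x₃ * c₇ = e₂ * f₂ * c₉ * c₉)
    (hlantern₄ : f₂ * t * v = f₁ * c₅ * c₇ * c₉) (hy : c₇ * y = x₃ * c₇)
    (hδ₂ : Commute δ₂ (e₁ * f₁)) (hδ₃ : Commute δ₃ (e₂ * f₂))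
    (hc₅ : ∀ b ∈ [c₇, c₉, t, v], Commute c₅ b) (hf₁ : ∀ b ∈ [c₇, c₉, x₂, t, v], Commute f₁ b)
    (hc₉ : Commute c₉ (c₇⁻¹ * c₆ * c₇ * y)) :
    e₁ * f₁ * δ₂⁻¹ * (c₆ * e₂ * c₆ * f₂) * ((c₉ * c₈) ^ 2)⁻¹ =
      f₁⁻¹ * x₂ * t * v * (c₇⁻¹ * c₆ * c₇ * y) * (c₈ * c₉ * c₉ * c₈ * c₈) := by
  calc e₁ * f₁ * δ₂⁻¹ * (c₆ * e₂ * c₆ * f₂) * ((c₉ * c₈) ^ 2)⁻¹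
      = f₁⁻¹ * x₂ * t * v * (c₇ * c₉)⁻¹ * c₆ * (e₂ * f₂ * ((c₉ * c₈) ^ 2)⁻¹) := by
        rw [boundary_inv_mul_chain hb hlantern₂ hlantern₄ hδ₂ hc₅ hf₁]; simp only [mul_assoc]
    _ = f₁⁻¹ * x₂ * t * v * (c₉⁻¹ * (c₇⁻¹ * c₆ * c₇ * y)) * c₉ * (c₈ * c₉ * c₉ * c₈ * c₈) := by
        rw [mul_braid_sq_inv hb' hchain hlantern₃ hy hδ₃]; simp only [mul_inv_rev, mul_assoc]
    _ = f₁⁻¹ * x₂ * t * v * (c₇⁻¹ * c₆ * c₇ * y) * (c₈ * c₉ * c₉ * c₈ * c₈) := by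
        rw [hc₉.inv_left.eq]; simp only [mul_assoc, inv_mul_cancel_left]

theorem absorb_inv_of_lantern {a c f t t' v v' x y : G}
    (hlantern : f * t' * v' = a * v * c) (hf : Commute f a)
    (hc : ∀ b ∈ [x, t, v, y], Commute c b) :
    a * f⁻¹ * x * t * v * y * c = t' * v' * (v⁻¹ * x * v) * (v⁻¹ * t * v) * y := by
  simp only [List.forall_mem_cons] at hc
  obtain ⟨hx, ht, hv, hy, -⟩ := hc
  have hword : Commute c (x * t * v * y) := ((hx.mul_right ht).mul_right hv).mul_right hy
  calc a * f⁻¹ * x * t * v * y * c = a * f⁻¹ * (x * t * v * y * c) := by simp only [mul_assoc]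
    _ = f⁻¹ * a * (c * v) * (v⁻¹ * (x * t * v * y)) := by
        rw [← hword.eq, hf.inv_left.eq]; group
    _ = f⁻¹ * (f * t' * v') * (v⁻¹ * (x * t * v * y)) := by
        rw [hlantern, hv.eq]; simp only [mul_assoc]
    _ = t' * v' * (v⁻¹ * x * v) * (v⁻¹ * t * v) * y := by group

theorem genus_four_alternate_general
    {c₁ c₂ c₃ c₄ c₅ c₆ c₇ c₈ c₉ e₁ f₁ e₂ f₂ x₁ x₂ x₃ xb₃ δ₁ δ₂ δ₃ t v t₁₄ v₁₄ : G}
    (hb₁ : c₁ * c₂ * c₁ = c₂ * c₁ * c₂)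
    (hb₂ : c₄ * e₁ * c₄ = e₁ * c₄ * e₁)
    (hb₃ : c₆ * e₂ * c₆ = e₂ * c₆ * e₂)
    (hb₄ : c₈ * c₉ * c₈ = c₉ * c₈ * c₉)
    (hchain₁ : (c₄ * e₁ * c₄ * f₁) ^ 3 = δ₁ * δ₂)
    (hchain₂ : (c₉ * c₈) ^ 6 = δ₃)
    (hlantern₁ : δ₁ * x₁ * c₃ = c₁ * c₁ * e₁ * f₁)
    (hlantern₂ : δ₂ * x₂ * c₅ = e₁ * f₁ * e₂ * f₂)
    (hlantern₃ : δ₃ * x₃ * c₇ = e₂ * f₂ * c₉ * c₉)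
    (hlantern₄ : f₂ * t * v = f₁ * c₅ * c₇ * c₉)
    (hlantern₅ : f₁ * t₁₄ * v₁₄ = c₁ * c₃ * v * c₉)
    (hx₃ : c₇ * xb₃ = x₃ * c₇)
    (hδ₁ : Commute δ₁ c₁)
    (hδ₂ : ∀ b ∈ [c₄, e₁, f₁], Commute δ₂ b)
    (hδ₃ : ∀ b ∈ [e₂, f₂], Commute δ₃ b)
    (hef : Commute e₁ f₁)
    (hc₁ : ∀ b ∈ [c₃, c₄, e₁, f₁, x₁], Commute c₁ b)
    (hc₃ : ∀ b ∈ [e₁, f₁], Commute c₃ b)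
    (hc₅ : ∀ b ∈ [c₇, c₉, t, v], Commute c₅ b)
    (hc₉ : ∀ b ∈ [c₆, c₇, x₂, xb₃, t, v], Commute c₉ b)
    (hf₁ : ∀ b ∈ [c₇, c₉, x₂, t, v], Commute f₁ b) :
    (c₁ * c₂) ^ 2 * (c₄ * e₁ * c₄ * f₁)⁻¹ * (c₆ * e₂ * c₆ * f₂) * ((c₉ * c₈) ^ 2)⁻¹ =
      (c₁ * c₁ * c₂ * c₁⁻¹ * c₁⁻¹) * x₁ * (c₃ * (f₁⁻¹ * c₄ * f₁) * c₃⁻¹) * e₁ * e₁ *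
        (c₃ * c₄ * c₃⁻¹) * t₁₄ * v₁₄ * (v⁻¹ * x₂ * v) * (v⁻¹ * t * v) *
        (c₇⁻¹ * c₆ * c₇) * xb₃ * (c₉⁻¹ * c₈ * c₉) * c₉ * c₈ * c₈ := by
  simp only [List.forall_mem_cons] at hδ₂ hδ₃ hc₃ hc₉
  obtain ⟨hδ₂c₄, hδ₂e₁, hδ₂f₁, -⟩ := hδ₂
  obtain ⟨hδ₃e₂, hδ₃f₂, -⟩ := hδ₃
  obtain ⟨hc₃e₁, hc₃f₁, -⟩ := hc₃
  obtain ⟨hc₉c₆, hc₉c₇, hc₉x₂, hc₉xb₃, hc₉t, hc₉v, -⟩ := hc₉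
  have hδ₂A : Commute δ₂ (c₄ * e₁ * c₄ * f₁) :=
    ((hδ₂c₄.mul_right hδ₂e₁).mul_right hδ₂c₄).mul_right hδ₂f₁
  have hc₉s : Commute c₉ (c₇⁻¹ * c₆ * c₇ * xb₃) :=
    ((hc₉c₇.inv_right.mul_right hc₉c₆).mul_right hc₉c₇).mul_right hc₉xb₃
  have hf₁c : Commute f₁ (c₁ * c₃) := ((hc₁ f₁ (by simp)).mul_left hc₃f₁).symm
  have hleft := braid_sq_mul_chain_inv hb₁ hb₂ hchain₁ hlantern₁ hef hδ₁ hδ₂A hc₁ hc₃e₁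
  have hright := boundary_inv_mul_chain_mul_braid_sq_inv hb₃ hb₄ hchain₂ hlantern₂ hlantern₃
    hlantern₄ hx₃ (hδ₂e₁.mul_right hδ₂f₁) (hδ₃e₂.mul_right hδ₃f₂) hc₅ hf₁ hc₉s
  have habsorb := absorb_inv_of_lantern hlantern₅ hf₁c (x := x₂) (t := t)
    (y := c₇⁻¹ * c₆ * c₇ * xb₃) (by simp [hc₉x₂, hc₉t, hc₉v, hc₉s])
  set p := (c₁ * c₁ * c₂ * c₁⁻¹ * c₁⁻¹) * x₁ * (c₃ * (f₁⁻¹ * c₄ * f₁) * c₃⁻¹) * e₁ * e₁ *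
    (c₃ * c₄ * c₃⁻¹)
  calc (c₁ * c₂) ^ 2 * (c₄ * e₁ * c₄ * f₁)⁻¹ * (c₆ * e₂ * c₆ * f₂) * ((c₉ * c₈) ^ 2)⁻¹
      = p * (c₁ * c₃) *
          (e₁ * f₁ * δ₂⁻¹ * (c₆ * e₂ * c₆ * f₂) * ((c₉ * c₈) ^ 2)⁻¹) := by
        rw [hleft]; simp only [mul_assoc]
    _ = p * (c₁ * c₃ * f₁⁻¹ * x₂ * t * v * (c₇⁻¹ * c₆ * c₇ * xb₃) * c₉) *
          (c₉⁻¹ * c₈ * c₉) * c₉ * c₈ * c₈ := by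
        rw [hright]; simp only [mul_assoc, mul_inv_cancel_left]
    _ = p * t₁₄ * v₁₄ * (v⁻¹ * x₂ * v) * (v⁻¹ * t * v) *
          (c₇⁻¹ * c₆ * c₇) * xb₃ * (c₉⁻¹ * c₈ * c₉) * c₉ * c₈ * c₈ := by
        rw [habsorb]; simp only [mul_assoc]

end GroupRelations

theorem genus_four_alternate {G : Type*} [Group G]
    (c₁ c₂ c₃ c₄ c₅ c₆ c₇ c₈ c₉ e₁ f₁ e₂ f₂ x₁ x₂ x₃ xb₃ δ₁ δ₂ δ₃ t v t₁₄ v₁₄ : G)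
    (hb₁ : c₁ * c₂ * c₁ = c₂ * c₁ * c₂)
    (hb₂ : c₄ * e₁ * c₄ = e₁ * c₄ * e₁)
    (hb₃ : c₄ * f₁ * c₄ = f₁ * c₄ * f₁)
    (hb₄ : c₆ * e₂ * c₆ = e₂ * c₆ * e₂)
    (hb₅ : c₈ * c₉ * c₈ = c₉ * c₈ * c₉)
    (hchain₁ : (c₄ * e₁ * c₄ * f₁) ^ 3 = δ₁ * δ₂)
    (hchain₂ : (c₉ * c₈) ^ 6 = δ₃)
    (hlantern₁ : δ₁ * x₁ * c₃ = c₁ * c₁ * e₁ * f₁)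
    (hlantern₂ : δ₂ * x₂ * c₅ = e₁ * f₁ * e₂ * f₂)
    (hlantern₃ : δ₃ * x₃ * c₇ = e₂ * f₂ * c₉ * c₉)
    (hlantern₄ : f₂ * t * v = f₁ * c₅ * c₇ * c₉)
    (hx₃ : c₇ * xb₃ = x₃ * c₇)
    (hδ : ∀ a ∈ [δ₁, δ₂, δ₃],
      ∀ b ∈ [δ₁, δ₂, δ₃, c₁, c₂, c₃, c₄, c₅, c₆, c₇, c₈, c₉, e₁, f₁, e₂, f₂,
        x₁, x₂, x₃, xb₃, t, v, t₁₄, v₁₄], a * b = b * a)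
    (hef₁ : e₁ * f₁ = f₁ * e₁)
    (hef₂ : e₂ * f₂ = f₂ * e₂)
    (h₁₂ : ∀ a ∈ [e₁, f₁], ∀ b ∈ [e₂, f₂, x₂, c₅], a * b = b * a)
    (h₂₃ : ∀ a ∈ [e₂, f₂], ∀ b ∈ [x₃, c₇, c₉], a * b = b * a)
    (hpair : List.Pairwise (fun a b => a * b = b * a) [f₁, c₅, c₇, c₉])
    (hf₁ : ∀ b ∈ [x₂, t, v], f₁ * b = b * f₁)
    (htv : ∀ a ∈ [t, v], a * c₅ = c₅ * a)
    (hc₉ : ∀ b ∈ [c₆, x₃, xb₃], c₉ * b = b * c₉)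
    (hc₁ : ∀ b ∈ [c₃, c₄, c₅, c₆, c₇, c₈, c₉, e₁, f₁, x₁, x₂, t, v, xb₃],
      c₁ * b = b * c₁)
    (hlantern₅ : f₁ * t₁₄ * v₁₄ = c₁ * c₃ * v * c₉)
    (hpair' : List.Pairwise (fun a b => a * b = b * a) [c₁, c₃, v, c₉])
    (hc₁' : ∀ b ∈ [t₁₄, v₁₄], c₁ * b = b * c₁)
    (hc₃ : ∀ b ∈ [e₁, t₁₄, v₁₄], c₃ * b = b * c₃)
    (hc₉' : ∀ b ∈ [x₂, t, v], c₉ * b = b * c₉) :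
    (c₁ * c₂) ^ 2 * (c₄ * e₁ * c₄ * f₁)⁻¹ * (c₆ * e₂ * c₆ * f₂) * ((c₉ * c₈) ^ 2)⁻¹ =
      (c₁ * c₁ * c₂ * c₁⁻¹ * c₁⁻¹) * x₁ * (c₃ * (f₁⁻¹ * c₄ * f₁) * c₃⁻¹) * e₁ * e₁ *
        (c₃ * c₄ * c₃⁻¹) * t₁₄ * v₁₄ * (v⁻¹ * x₂ * v) * (v⁻¹ * t * v) *
        (c₇⁻¹ * c₆ * c₇) * xb₃ * (c₉⁻¹ * c₈ * c₉) * c₉ * c₈ * c₈ := by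
  simp only [List.forall_mem_cons, List.pairwise_cons] at *
  have hc₃f₁ : Commute c₃ f₁ := commute_of_lantern hlantern₅ (by grind [commute_iff_eq])
  apply genus_four_alternate_general hb₁ hb₂ hb₄ hb₅ hchain₁ hchain₂ hlantern₁ hlantern₂
    hlantern₃ hlantern₄ hlantern₅ hx₃ <;> grind [commute_iff_eq]
end

section
/- Let G be a group, let g ≥ 5 be an odd integer, and let c₁, …, c_{2g+1}, e₁, …, e_{g−2}, f₁, …, f_{g−2}, x₁, …, x_{g−1}, δ₁, …, δ_{g−1} ∈ G. Assume: the braid relations a*b*a = b*a*b for the pairs (c₁, c₂), (c_{2g}, c_{2g+1}), and (c_{2i+2}, e_i), (c_{2i+2}, f_i) for every 1 ≤ i ≤ g−2; the chain relations (c_{2i+2}*e_i*c_{2i+2}*f_i)^3 = δ_i*δ_{i+1} for every odd i with 1 ≤ i ≤ g−2; the lantern relations δ₁*x₁*c₃ = c₁*c₁*e₁*f₁, δ_i*x_i*c_{2i+1} = e_{i−1}*f_{i−1}*e_i*f_i for every 2 ≤ i ≤ g−2, and δ_{g−1}*x_{g−1}*c_{2g−1} = e_{g−2}*f_{g−2}*c_{2g+1}*c_{2g+1};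 that every δ_i commutes with every other listed element (including every δ_j); and the commutations: e_i commutes with f_i for all i; e_i and f_i commute with e_j and f_j for all j ≠ i, with x_j for all j, and with c_k for all k ≠ 2i+2; and c₁ commutes with x₁ and c₃. Set d = c₁*c₂*c₁⁻¹ and r_j = f_j⁻¹*c_{2j+2}*f_j. Then (c₁*c₂)^2 * ∏_{i=1}^{g−2} (c_{2i+2}*e_i*c_{2i+2}*f_i)^{ε_i} * (c_{2g+1}*c_{2g})^2, where ε_i = −1 for odd i and ε_i = +1 for even i and the factors are taken in increasing order of i, equals c₁ * d * ∏_{odd j, 1 ≤ j ≤ g−4} ( x_j * c_{2j+1} * r_j * e_j * e_j * c_{2j+2} * x_{j+1} * c_{2j+3} * f_{j+1}⁻¹ * c_{2j+4} ) * x_{g−2} * c_{2g−3} * r_{g−2} * e_{g−2} * e_{g−2} * c_{2g−2} * x_{g−1} * c_{2g−1} * c_{2g} * c_{2g+1}, where again the factors of the product are taken in increasing order of j. -/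
/-!
Each lantern relation reads `δ i * y i = h (i - 1) * h i`, where `y i = x i * c (2 * i + 1)` and
`h 0, …, h (g - 1)` is the family `c 1 * c 1`, `e 1 * f 1`, …, `e (g - 2) * f (g - 2)`,
`c (2 * g + 1) * c (2 * g + 1)`. Braiding writes the `i`-th chain word `w` as `h i * s * h i` and
its square as `h i * t * h i`, so `w⁻¹ = w ^ 2 * (w ^ 3)⁻¹` and the chain relation turn
`h (i - 1) * w⁻¹ * h (i + 1)` into `y i * t * y (i + 1)`. For odd `i` this consumes one factor `h`
on each side of `w⁻¹`, and for even `i` the word `w` supplies them. The two outermost ones come from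
the squares `(c 1 * c 2) ^ 2` and `(c (2 * g + 1) * c (2 * g)) ^ 2`.
-/

section Monoid

variable {M : Type*} [Monoid M]

theorem filter_odd_Ico_one (n : ℕ) :
    (List.Ico 1 (2 * n)).filter (fun j => Odd j) = (List.range n).map (fun k => 2 * k + 1) := by
  induction n with
  | zero => simp
  | succ n ih =>
    rw [List.range_succ, List.map_append, ← ih]
    rcases Nat.eq_zero_or_pos n with rfl | hn
    · decide
    · rw [Nat.mul_succ, List.Ico.succ_top (by omega), List.Ico.succ_top (by omega)]
      simp

theorem prod_map_Ico_one_two_mul_add_one (φ : ℕ → M) (n : ℕ) :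
    ((List.Ico 1 (2 * n + 1)).map φ).prod =
      ((List.range n).map fun k => φ (2 * k + 1) * φ (2 * k + 2)).prod := by
  induction n with
  | zero => simp
  | succ n ih =>
    rw [Nat.mul_succ, List.Ico.succ_top (by omega), List.Ico.succ_top (by omega), List.range_succ]
    simp [ih]

theorem mul_prod_map_range_of_intertwine {h A B : ℕ → M} {n : ℕ}
    (hAB : ∀ k < n, h k * A k = B k * h (k + 1)) :
    h 0 * ((List.range n).map A).prod = ((List.range n).map B).prod * h n := by
  induction n with
  | zero => simp
  | succ n ih =>
    rw [List.prod_range_succ, List.prod_range_succ, ← mul_assoc,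
      ih fun k hk => hAB k (hk.trans n.lt_succ_self), mul_assoc, hAB n n.lt_succ_self, mul_assoc]

theorem mul_sq_of_braid {a b : M} (hab : a * b * a = b * a * b) :
    (a * b) ^ 2 = a * a * (b * a) := by
  rw [sq, mul_assoc, ← mul_assoc b, ← hab]
  simp only [mul_assoc]

/-- The boundary products `h 0, …, h (g - 1)` such that the `i`-th lantern relation has right-hand
side `h (i - 1) * h i`. The two ends, where there is no pair `e i`, `f i`, are the squares of `c 1`
and `c (2 * g + 1)`. -/
def lanternHalf (c e f : ℕ → M) (g i : ℕ) : M :=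
  if i = 0 then c 1 * c 1 else if i = g - 1 then c (2 * g + 1) * c (2 * g + 1) else e i * f i

theorem lanternHalf_zero (c e f : ℕ → M) (g : ℕ) : lanternHalf c e f g 0 = c 1 * c 1 :=
  if_pos rfl

theorem lanternHalf_sub_one (c e f : ℕ → M) {g : ℕ} (hg : 2 ≤ g) :
    lanternHalf c e f g (g - 1) = c (2 * g + 1) * c (2 * g + 1) := by
  rw [lanternHalf, if_neg (by omega), if_pos rfl]

theorem lanternHalf_of_le (c e f : ℕ → M) {g i : ℕ} (hi : 1 ≤ i) (hig : i ≤ g - 2) :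
    lanternHalf c e f g i = e i * f i := by
  rw [lanternHalf, if_neg (by omega), if_neg (by omega)]

theorem lantern_eq_lanternHalf_mul {g : ℕ} (hg : 3 ≤ g) {c e f x δ : ℕ → M}
    (hlantern₁ : δ 1 * x 1 * c 3 = c 1 * c 1 * e 1 * f 1)
    (hlantern : ∀ i, 2 ≤ i → i ≤ g - 2 →
      δ i * x i * c (2 * i + 1) = e (i - 1) * f (i - 1) * e i * f i)
    (hlantern' : δ (g - 1) * x (g - 1) * c (2 * g - 1) =
      e (g - 2) * f (g - 2) * c (2 * g + 1) * c (2 * g + 1)) (i : ℕ) (hi : i ≤ g - 2) :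
    δ (i + 1) * (x (i + 1) * c (2 * (i + 1) + 1)) =
      lanternHalf c e f g i * lanternHalf c e f g (i + 1) := by
  rcases Nat.eq_zero_or_pos i with rfl | hi₀
  · simpa only [lanternHalf_zero, lanternHalf_of_le c e f le_rfl (show 1 ≤ g - 2 by omega),
      mul_assoc] using hlantern₁
  rw [lanternHalf_of_le c e f hi₀ hi]
  rcases hi.eq_or_lt with rfl | hi
  · have hc : 2 * (g - 1) + 1 = 2 * g - 1 := by omega
    have hsucc : g - 2 + 1 = g - 1 := by omega
    simpa only [hsucc, hc, lanternHalf_sub_one c e f (show 2 ≤ g by omega), mul_assoc]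
      using hlantern'
  · simpa only [lanternHalf_of_le c e f i.succ_pos hi, Nat.add_sub_cancel, mul_assoc]
      using hlantern (i + 1) (by omega) hi

end Monoid

section Group

variable {G : Type*} [Group G]

theorem mul_alternating_prod_mul {n : ℕ} {w h r s : ℕ → G}
    (hodd : ∀ k ≤ n, h (2 * k) * (w (2 * k + 1))⁻¹ * h (2 * k + 2) = r (2 * k + 1))
    (heven : ∀ k < n, w (2 * k + 2) = h (2 * k + 2) * s (2 * k + 2) * h (2 * k + 2)) :
    h 0 * ((List.Ico 1 (2 * n + 2)).map fun i => if Odd i then (w i)⁻¹ else w i).prod *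
        h (2 * n + 2) =
      (((List.Ico 1 (2 * n)).filter (fun j => Odd j)).map fun j => r j * s (j + 1)).prod *
        r (2 * n + 1) := by
  have hpair : ∀ k < n, h (2 * k) * ((w (2 * k + 1))⁻¹ * w (2 * k + 2)) =
      r (2 * k + 1) * s (2 * k + 2) * h (2 * (k + 1)) := fun k hk => by
    rw [heven k hk, ← hodd k hk.le]
    simp only [mul_assoc, Nat.mul_succ]
  have htel := mul_prod_map_range_of_intertwine (h := fun k => h (2 * k)) hpair
  rw [List.Ico.succ_top (by omega), List.map_append, List.prod_append,
    prod_map_Ico_one_two_mul_add_one, filter_odd_Ico_one, List.map_map, ← hodd n le_rfl]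
  have hodd' (k : ℕ) : Odd (2 * k + 1) := ⟨k, rfl⟩
  have heven' (k : ℕ) : ¬Odd (2 * k + 2) := by simp [Nat.odd_add]
  simp only [hodd', heven', if_true, if_false, List.map_singleton, List.prod_singleton,
    Function.comp_def, ← mul_assoc] at htel ⊢
  rw [htel]

/-- The four-letter word `a * e * a * f` whose cube is the boundary multitwist in the chain relation
of a torus with two boundary components. The curve of `a` meets those of `e` and `f` once. -/
def chainWord (a e f : G) : G :=
  a * e * a * f

/-- The factor `t` in `chainWord a e f ^ 2 = e * f * t * (e * f)`: a positive word in `e`, `a` and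
the conjugate `f⁻¹ * a * f`, which is the letter `r` of the final word. -/
def chainSqCore (a e f : G) : G :=
  f⁻¹ * a * f * e * e * a

theorem chainWord_eq {a e f : G} (hae : a * e * a = e * a * e) :
    chainWord a e f = e * f * (f⁻¹ * a) * (e * f) := by
  rw [chainWord, hae]
  group

theorem chainWord_sq {a e f : G} (hae : a * e * a = e * a * e) (hef : Commute e f) :
    chainWord a e f ^ 2 = e * f * chainSqCore a e f * (e * f) := by
  calc chainWord a e f ^ 2 = e * a * (e * f) * (e * a * e) * f := by
        rw [sq, chainWord, hae]; simp only [mul_assoc]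
    _ = e * a * (f * e) * (e * a * e) * f := by rw [hef.eq]
    _ = e * f * chainSqCore a e f * (e * f) := by rw [chainSqCore]; group

theorem mul_inv_mul_of_pow_three_eq {w m t p q y z u v : G}
    (hsq : w ^ 2 = m * t * m) (hcube : w ^ 3 = p * q)
    (hu : p * y = u * m) (hv : q * z = m * v)
    (hpy : Commute p y) (hpm : Commute p m) (hqm : Commute q m) (hqw : Commute q w) :
    u * w⁻¹ * v = y * t * z := by
  have hu' : u = y * p * m⁻¹ := by rw [← hpy.eq, hu, mul_inv_cancel_right]
  have hv' : v = m⁻¹ * q * z := by rw [mul_assoc, hv, inv_mul_cancel_left]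
  have ht : t = m⁻¹ * (p * q) * w⁻¹ * m⁻¹ := by
    rw [← hcube, pow_succ, hsq]
    group
  calc u * w⁻¹ * v = y * (p * m⁻¹) * (w⁻¹ * (m⁻¹ * q)) * z := by
        rw [hu', hv']; simp only [mul_assoc]
    _ = y * (m⁻¹ * p) * (q * (w⁻¹ * m⁻¹)) * z := by
        rw [hpm.inv_right.eq, ← mul_assoc w⁻¹, (hqw.inv_right.mul_right hqm.inv_right).eq,
          mul_assoc w⁻¹]
    _ = y * t * z := by rw [ht]; simp only [mul_assoc]

theorem mul_inv_chainWord_mul {a e f p q y z u v : G}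
    (hae : a * e * a = e * a * e) (hef : Commute e f) (hchain : chainWord a e f ^ 3 = p * q)
    (hu : p * y = u * (e * f)) (hv : q * z = e * f * v)
    (hpy : Commute p y) (hpe : Commute p e) (hpf : Commute p f)
    (hqa : Commute q a) (hqe : Commute q e) (hqf : Commute q f) :
    u * (chainWord a e f)⁻¹ * v = y * chainSqCore a e f * z :=
  mul_inv_mul_of_pow_three_eq (chainWord_sq hae hef) hchain hu hv hpy (hpe.mul_right hpf)
    (hqe.mul_right hqf) (((hqa.mul_right hqe).mul_right hqa).mul_right hqf)

theorem mul_alternating_chainWord_prod_mul {n : ℕ} {a e f y h δ : ℕ → G}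
    (hh : ∀ i, 1 ≤ i → i ≤ 2 * n + 1 → h i = e i * f i)
    (hae : ∀ i, 1 ≤ i → i ≤ 2 * n + 1 → a i * e i * a i = e i * a i * e i)
    (hef : ∀ k ≤ n, Commute (e (2 * k + 1)) (f (2 * k + 1)))
    (hchain : ∀ k ≤ n, chainWord (a (2 * k + 1)) (e (2 * k + 1)) (f (2 * k + 1)) ^ 3 =
      δ (2 * k + 1) * δ (2 * k + 2))
    (hlantern : ∀ i ≤ 2 * n + 1, δ (i + 1) * y (i + 1) = h i * h (i + 1))
    (hδy : ∀ k ≤ n, Commute (δ (2 * k + 1)) (y (2 * k + 1)))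
    (hδe : ∀ k ≤ n, Commute (δ (2 * k + 1)) (e (2 * k + 1)))
    (hδf : ∀ k ≤ n, Commute (δ (2 * k + 1)) (f (2 * k + 1)))
    (hδa' : ∀ k ≤ n, Commute (δ (2 * k + 2)) (a (2 * k + 1)))
    (hδe' : ∀ k ≤ n, Commute (δ (2 * k + 2)) (e (2 * k + 1)))
    (hδf' : ∀ k ≤ n, Commute (δ (2 * k + 2)) (f (2 * k + 1))) :
    h 0 * ((List.Ico 1 (2 * n + 2)).map fun i =>
        if Odd i then (chainWord (a i) (e i) (f i))⁻¹ else chainWord (a i) (e i) (f i)).prod *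
        h (2 * n + 2) =
      (((List.Ico 1 (2 * n)).filter (fun j => Odd j)).map fun j =>
        y j * chainSqCore (a j) (e j) (f j) * y (j + 1) * ((f (j + 1))⁻¹ * a (j + 1))).prod *
      (y (2 * n + 1) * chainSqCore (a (2 * n + 1)) (e (2 * n + 1)) (f (2 * n + 1)) *
        y (2 * n + 2)) := by
  refine mul_alternating_prod_mul (w := fun i => chainWord (a i) (e i) (f i))
    (r := fun i => y i * chainSqCore (a i) (e i) (f i) * y (i + 1))
    (s := fun i => (f i)⁻¹ * a i) (fun k hk => ?_) (fun k hk => ?_)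
  · have hmid := hh (2 * k + 1) (by omega) (by omega)
    exact mul_inv_chainWord_mul (hae _ (by omega) (by omega)) (hef k hk) (hchain k hk)
      (hmid ▸ hlantern (2 * k) (by omega)) (hmid ▸ hlantern (2 * k + 1) (by omega))
      (hδy k hk) (hδe k hk) (hδf k hk) (hδa' k hk) (hδe' k hk) (hδf' k hk)
  · rw [hh _ (by omega) (by omega), chainWord_eq (hae _ (by omega) (by omega))]

theorem odd_genus_word_general (g : ℕ) (hg : 3 ≤ g) (hgodd : Odd g) (c e f x δ : ℕ → G)
    (hb₁ : c 1 * c 2 * c 1 = c 2 * c 1 * c 2)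
    (hb₂ : c (2 * g) * c (2 * g + 1) * c (2 * g) = c (2 * g + 1) * c (2 * g) * c (2 * g + 1))
    (hbe : ∀ i, 1 ≤ i → i ≤ g - 2 →
      c (2 * i + 2) * e i * c (2 * i + 2) = e i * c (2 * i + 2) * e i)
    (hchain : ∀ i, Odd i → 1 ≤ i → i ≤ g - 2 →
      (c (2 * i + 2) * e i * c (2 * i + 2) * f i) ^ 3 = δ i * δ (i + 1))
    (hlantern₁ : δ 1 * x 1 * c 3 = c 1 * c 1 * e 1 * f 1)
    (hlantern : ∀ i, 2 ≤ i → i ≤ g - 2 →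
      δ i * x i * c (2 * i + 1) = e (i - 1) * f (i - 1) * e i * f i)
    (hlantern' : δ (g - 1) * x (g - 1) * c (2 * g - 1) =
      e (g - 2) * f (g - 2) * c (2 * g + 1) * c (2 * g + 1))
    (hδc : ∀ i k, 1 ≤ i → i ≤ g - 1 → 1 ≤ k → k ≤ 2 * g + 1 → δ i * c k = c k * δ i)
    (hδe : ∀ i k, 1 ≤ i → i ≤ g - 1 → 1 ≤ k → k ≤ g - 2 → δ i * e k = e k * δ i)
    (hδf : ∀ i k, 1 ≤ i → i ≤ g - 1 → 1 ≤ k → k ≤ g - 2 → δ i * f k = f k * δ i)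
    (hδx : ∀ i k, 1 ≤ i → i ≤ g - 1 → 1 ≤ k → k ≤ g - 1 → δ i * x k = x k * δ i)
    (hef : ∀ i, 1 ≤ i → i ≤ g - 2 → e i * f i = f i * e i) :
    (c 1 * c 2) ^ 2 *
      ((List.Ico 1 (g - 1)).map (fun i =>
        if Odd i then (c (2 * i + 2) * e i * c (2 * i + 2) * f i)⁻¹
        else c (2 * i + 2) * e i * c (2 * i + 2) * f i)).prod *
      (c (2 * g + 1) * c (2 * g)) ^ 2 =
    c 1 * (c 1 * c 2 * (c 1)⁻¹) *
      (((List.Ico 1 (g - 3)).filter (fun j => Odd j)).map (fun j =>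
        x j * c (2 * j + 1) * ((f j)⁻¹ * c (2 * j + 2) * f j) * e j * e j * c (2 * j + 2) *
          x (j + 1) * c (2 * j + 3) * (f (j + 1))⁻¹ * c (2 * j + 4))).prod *
      x (g - 2) * c (2 * g - 3) * ((f (g - 2))⁻¹ * c (2 * (g - 2) + 2) * f (g - 2)) *
      e (g - 2) * e (g - 2) * c (2 * g - 2) * x (g - 1) * c (2 * g - 1) *
      c (2 * g) * c (2 * g + 1) := by
  have hlan := lantern_eq_lanternHalf_mul hg hlantern₁ hlantern hlantern'
  have h_zero := lanternHalf_zero c e f g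
  have h_last := lanternHalf_sub_one c e f (show 2 ≤ g by omega)
  have h_mid (i : ℕ) := lanternHalf_of_le c e f (g := g) (i := i)
  obtain ⟨n, hn⟩ : ∃ n, g = 2 * n + 3 := by
    obtain ⟨m, rfl⟩ := hgodd
    exact ⟨m - 1, by omega⟩
  have hg₁ : g - 1 = 2 * n + 2 := by omega
  have hg₂ : g - 2 = 2 * n + 1 := by omega
  have hword := mul_alternating_chainWord_prod_mul (n := n) (a := fun i => c (2 * i + 2))
    (y := fun i => x i * c (2 * i + 1)) (hg₂ ▸ h_mid) (hg₂ ▸ hbe)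
    (fun k _ => hef _ (by omega) (by omega))
    (fun k _ => hchain _ ⟨k, rfl⟩ (by omega) (by omega)) (hg₂ ▸ hlan)
    (fun k _ => Commute.mul_right (hδx _ _ (by omega) (by omega) (by omega) (by omega))
      (hδc _ _ (by omega) (by omega) (by omega) (by omega)))
    (fun k _ => hδe _ _ (by omega) (by omega) (by omega) (by omega))
    (fun k _ => hδf _ _ (by omega) (by omega) (by omega) (by omega))
    (fun k _ => hδc _ _ (by omega) (by omega) (by omega) (by omega))
    (fun k _ => hδe _ _ (by omega) (by omega) (by omega) (by omega))
    (fun k _ => hδf _ _ (by omega) (by omega) (by omega) (by omega))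
  have hstart : (c 1 * c 2) ^ 2 = c 1 * (c 1 * c 2 * (c 1)⁻¹) * lanternHalf c e f g 0 := by
    rw [mul_sq_of_braid hb₁, h_zero]
    group
  have hend : (c (2 * g + 1) * c (2 * g)) ^ 2 =
      lanternHalf c e f g (2 * n + 2) * (c (2 * g) * c (2 * g + 1)) := by
    rw [mul_sq_of_braid hb₂.symm, ← h_last, hg₁]
  simp only [chainWord, chainSqCore] at hword
  rw [hstart, hend, hg₁, mul_assoc _ (lanternHalf c e f g 0),
    ← mul_assoc _ (lanternHalf _ _ _ _ _), mul_assoc _ _ (lanternHalf _ _ _ _ _), hword]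
  simp only [hg₂, show g - 3 = 2 * n by omega, show 2 * g - 1 = 2 * (2 * n + 2) + 1 by omega,
    show 2 * g - 2 = 2 * (2 * n + 1) + 2 by omega, show 2 * g - 3 = 2 * (2 * n + 1) + 1 by omega,
    mul_assoc, Nat.mul_add_one, Nat.add_assoc, Nat.reduceAdd]

end Group

theorem odd_genus_word {G : Type*} [Group G] (g : ℕ) (hg5 : 5 ≤ g) (hgodd : Odd g)
    (c e f x δ : ℕ → G)
    (hb₁ : c 1 * c 2 * c 1 = c 2 * c 1 * c 2)
    (hb₂ : c (2*g) * c (2*g+1) * c (2*g) = c (2*g+1) * c (2*g) * c (2*g+1))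
    (hbe : ∀ i, 1 ≤ i → i ≤ g - 2 →
      c (2*i+2) * e i * c (2*i+2) = e i * c (2*i+2) * e i)
    (hbf : ∀ i, 1 ≤ i → i ≤ g - 2 →
      c (2*i+2) * f i * c (2*i+2) = f i * c (2*i+2) * f i)
    (hchain : ∀ i, Odd i → 1 ≤ i → i ≤ g - 2 →
      (c (2*i+2) * e i * c (2*i+2) * f i) ^ 3 = δ i * δ (i+1))
    (hlantern₁ : δ 1 * x 1 * c 3 = c 1 * c 1 * e 1 * f 1)
    (hlantern : ∀ i, 2 ≤ i → i ≤ g - 2 →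
      δ i * x i * c (2*i+1) = e (i-1) * f (i-1) * e i * f i)
    (hlantern' : δ (g-1) * x (g-1) * c (2*g-1)
      = e (g-2) * f (g-2) * c (2*g+1) * c (2*g+1))
    (hδδ : ∀ i j, 1 ≤ i → i ≤ g-1 → 1 ≤ j → j ≤ g-1 → δ i * δ j = δ j * δ i)
    (hδc : ∀ i k, 1 ≤ i → i ≤ g-1 → 1 ≤ k → k ≤ 2*g+1 → δ i * c k = c k * δ i)
    (hδe : ∀ i k, 1 ≤ i → i ≤ g-1 → 1 ≤ k → k ≤ g-2 → δ i * e k = e k * δ i)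
    (hδf : ∀ i k, 1 ≤ i → i ≤ g-1 → 1 ≤ k → k ≤ g-2 → δ i * f k = f k * δ i)
    (hδx : ∀ i k, 1 ≤ i → i ≤ g-1 → 1 ≤ k → k ≤ g-1 → δ i * x k = x k * δ i)
    (hef : ∀ i, 1 ≤ i → i ≤ g-2 → e i * f i = f i * e i)
    (hee : ∀ i j, 1 ≤ i → i ≤ g-2 → 1 ≤ j → j ≤ g-2 → i ≠ j → e i * e j = e j * e i)
    (hef' : ∀ i j, 1 ≤ i → i ≤ g-2 → 1 ≤ j → j ≤ g-2 → i ≠ j → e i * f j = f j * e i)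
    (hff : ∀ i j, 1 ≤ i → i ≤ g-2 → 1 ≤ j → j ≤ g-2 → i ≠ j → f i * f j = f j * f i)
    (hex : ∀ i j, 1 ≤ i → i ≤ g-2 → 1 ≤ j → j ≤ g-1 → e i * x j = x j * e i)
    (hfx : ∀ i j, 1 ≤ i → i ≤ g-2 → 1 ≤ j → j ≤ g-1 → f i * x j = x j * f i)
    (hec : ∀ i k, 1 ≤ i → i ≤ g-2 → 1 ≤ k → k ≤ 2*g+1 → k ≠ 2*i+2 →
      e i * c k = c k * e i)
    (hfc : ∀ i k, 1 ≤ i → i ≤ g-2 → 1 ≤ k → k ≤ 2*g+1 → k ≠ 2*i+2 →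
      f i * c k = c k * f i)
    (hc₁x : c 1 * x 1 = x 1 * c 1)
    (hc₁c₃ : c 1 * c 3 = c 3 * c 1) :
    (c 1 * c 2) ^ 2 *
      ((List.Ico 1 (g-1)).map (fun i =>
        if Odd i then (c (2*i+2) * e i * c (2*i+2) * f i)⁻¹
        else c (2*i+2) * e i * c (2*i+2) * f i)).prod *
      (c (2*g+1) * c (2*g)) ^ 2 =
    c 1 * (c 1 * c 2 * (c 1)⁻¹) *
      (((List.Ico 1 (g-3)).filter (fun j => Odd j)).map (fun j =>
        x j * c (2*j+1) * ((f j)⁻¹ * c (2*j+2) * f j) * e j * e j * c (2*j+2) *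
          x (j+1) * c (2*j+3) * (f (j+1))⁻¹ * c (2*j+4))).prod *
      x (g-2) * c (2*g-3) * ((f (g-2))⁻¹ * c (2*(g-2)+2) * f (g-2)) * e (g-2) * e (g-2) *
      c (2*g-2) * x (g-1) * c (2*g-1) * c (2*g) * c (2*g+1) :=
  odd_genus_word_general g (by omega) hgodd c e f x δ hb₁ hb₂ hbe hchain hlantern₁ hlantern
    hlantern' hδc hδe hδf hδx hef
end
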